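/- For all f, g : Fin k → Bool with val f + val g < 2^k, there exist unique c : Fin (k+1) → Bool and s : Fin k → Bool satisfying the ripple-carry adder constraints together with c (Fin.last k) = false; that is, the propositional adder encoding with the no-overflow condition ¬c_k is satisfiable exactly when the sum of the two summands fits in k bits, and the satisfying carry and sum bits are uniquely determined. -/

import Mathlib

/-!
The adder constraints determine the carries by recursion from `c 0 = false`, and the sum bits from
the carries, which gives uniqueness and, apart from the no-overflow condition, existence. For that
condition, adding up the full-adder identities `f i + g i + c i = s i + 2 * c (i + 1)` with weights
`2 ^ i` gives `val f + val g = val s + 2 ^ k * c k` (`val_add_val_of_adder`), so a final carry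
would force `2 ^ k ≤ val f + val g`.
-/

/-- Value of a little-endian bit vector. -/
def val {k : ℕ} (f : Fin k → Bool) : ℕ :=
  ∑ i : Fin k, 2 ^ (i : ℕ) * (if f i then 1 else 0)

/-- The full-adder identity summed over all bit positions, with no assumption on the final carry. -/
theorem val_add_val_of_adder {k : ℕ} (f g s : Fin k → Bool) (c : Fin (k + 1) → Bool)
    (h0 : c 0 = false)
    (hc : ∀ i : Fin k, c i.succ =
      ((f i && g i) || (f i && c i.castSucc) || (g i && c i.castSucc)))
    (hs : ∀ i : Fin k, s i = xor (f i) (xor (g i) (c i.castSucc))) :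
    val f + val g = val s + 2 ^ k * (if c (Fin.last k) then 1 else 0) := by
  induction k with
  | zero =>
    simpa [val] using h0
  | succ n ih =>
    have key := ih (fun i => f i.castSucc) (fun i => g i.castSucc) (fun i => s i.castSucc)
      (fun i => c i.castSucc) h0 (fun i => hc i.castSucc) (fun i => hs i.castSucc)
    have hc' := hc (Fin.last n)
    have hs' := hs (Fin.last n)
    rw [Fin.succ_last] at hc'
    simp only [val, Fin.sum_univ_castSucc, Fin.val_castSucc, Fin.val_last] at key ⊢
    rw [hc', hs']
    cases f (Fin.last n) <;> cases g (Fin.last n) <;> cases h : c (Fin.last n).castSucc <;>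
      simp [h, pow_succ] at key ⊢ <;> omega

theorem ripple_carry_adder_satisfiable {k : ℕ} (f g : Fin k → Bool)
    (h : val f + val g < 2 ^ k) :
    ∃! p : (Fin (k + 1) → Bool) × (Fin k → Bool),
      p.1 0 = false ∧
      (∀ i : Fin k, p.1 i.succ =
        ((f i && g i) || (f i && p.1 i.castSucc) || (g i && p.1 i.castSucc))) ∧
      (∀ i : Fin k, p.2 i = xor (f i) (xor (g i) (p.1 i.castSucc))) ∧
      p.1 (Fin.last k) = false := by
  obtain ⟨c, h0, hc⟩ : ∃ c : Fin (k + 1) → Bool, c 0 = false ∧ ∀ i : Fin k, c i.succ =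
      ((f i && g i) || (f i && c i.castSucc) || (g i && c i.castSucc)) :=
    ⟨fun j => Fin.induction (motive := fun _ => Bool) false
      (fun i b => (f i && g i) || (f i && b) || (g i && b)) j, rfl, fun _ => rfl⟩
  refine ⟨(c, fun i => xor (f i) (xor (g i) (c i.castSucc))),
    ⟨h0, hc, fun _ => rfl, ?_⟩, ?_⟩
  · have key := val_add_val_of_adder f g _ c h0 hc (fun _ => rfl)
    by_contra hl
    simp only [Bool.not_eq_false] at hl
    rw [hl] at key
    simp only [if_true] at key
    omega
  · rintro ⟨c', s'⟩ ⟨h0', hc', hs', -⟩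
    have e : c' = c := by
      funext j
      induction j using Fin.induction with
      | zero => exact h0'.trans h0.symm
      | succ i ih => exact (hc' i).trans (by rw [hc i, ← ih])
    subst e
    exact Prod.ext rfl (funext hs')
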